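/- Let W be a finite-dimensional 𝔽_p-vector space and G a subgroup of GL(W), and let F := Hom_{𝒱I}(−,W)/G with canonical surjection q. Let C := {w ∈ W : g(w) = w for all g ∈ G}, a subspace of W, and ι_C : C → W its inclusion. Then for an injective linear map δ : V → W, the pair (V, q(δ)) is central for F if and only if δ factors through ι_C; consequently the centre of F is (C, q(ι_C)), i.e. (C, q(ι_C)) is central and every central element of F is of the form (V, α^* q(ι_C)) for an injective linear map α : V → C. -/

import Mathlib

set_option maxHeartbeats 1000000

namespace Paper

/-- A finite-dimensional vector space over `𝔽_p = ZMod p`: an object of the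
categories `𝒱^f` and `𝒱I`. -/
structure FDVec (p : ℕ) [Fact p.Prime] : Type 1 where
  carrier : Type
  [addCommGroup' : AddCommGroup carrier]
  [module' : Module (ZMod p) carrier]
  [finiteDimensional' : FiniteDimensional (ZMod p) carrier]

attribute [instance] FDVec.addCommGroup' FDVec.module' FDVec.finiteDimensional'

instance (p : ℕ) [Fact p.Prime] : CoeSort (FDVec p) Type := ⟨FDVec.carrier⟩

abbrev FDVec.of (p : ℕ) [Fact p.Prime] (X : Type) [AddCommGroup X] [Module (ZMod p) X]
    [FiniteDimensional (ZMod p) X] : FDVec p := ⟨X⟩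

variable {p : ℕ} [Fact p.Prime]

/-- The object of `𝒱I` determined by a subspace. -/
abbrev subFD {W : FDVec p} (U : Submodule (ZMod p) W) : FDVec p := FDVec.of p U

theorem comp_injective {A B C : Type} [AddCommGroup A] [Module (ZMod p) A]
    [AddCommGroup B] [Module (ZMod p) B] [AddCommGroup C] [Module (ZMod p) C]
    (f : A →ₗ[ZMod p] B) (g : B →ₗ[ZMod p] C)
    (hf : Function.Injective f) (hg : Function.Injective g) :
    Function.Injective (g ∘ₗ f) := fun _ _ h => hf (hg h)

theorem linearMap_id_injective (V : Type) [AddCommGroup V] [Module (ZMod p) V] :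
    Function.Injective (LinearMap.id : V →ₗ[ZMod p] V) := fun _ _ h => h

theorem equiv_toLinearMap_injective {A B : Type} [AddCommGroup A] [Module (ZMod p) A]
    [AddCommGroup B] [Module (ZMod p) B] (e : A ≃ₗ[ZMod p] B) :
    Function.Injective (e.toLinearMap : A →ₗ[ZMod p] B) := e.injective

/-- A presheaf on the category `𝒱I` of finite-dimensional `𝔽_p`-vector spaces
and injective linear maps: a contravariant functor to `Set`. -/
structure VIPresheaf (p : ℕ) [Fact p.Prime] where
  obj : FDVec p → Type
  map : ∀ {V W : FDVec p} (f : V →ₗ[ZMod p] W), Function.Injective f → obj W → obj V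
  map_id : ∀ (V : FDVec p) (h : Function.Injective (LinearMap.id : V →ₗ[ZMod p] V))
      (x : obj V), map LinearMap.id h x = x
  map_comp : ∀ {V W X : FDVec p} (f : V →ₗ[ZMod p] W) (hf : Function.Injective f)
      (g : W →ₗ[ZMod p] X) (hg : Function.Injective g)
      (hgf : Function.Injective (g ∘ₗ f)) (x : obj X),
      map (g ∘ₗ f) hgf x = map f hf (map g hg x)

/-- A groupoid whose objects are the pairs `(U, i)` with `U` a subspace of `W i`,
and whose morphisms are linear isomorphisms between such subspaces. -/
structure SubGroupoid {ι : Type} (W : ι → FDVec p) where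
  mor : ∀ (i j : ι) (U : Submodule (ZMod p) (W i)) (U' : Submodule (ZMod p) (W j)),
    Set (↥U ≃ₗ[ZMod p] ↥U')
  id_mem : ∀ i U, LinearEquiv.refl (ZMod p) ↥U ∈ mor i i U U
  comp_mem : ∀ (i j k : ι) (U : Submodule (ZMod p) (W i)) (U' : Submodule (ZMod p) (W j))
      (U'' : Submodule (ZMod p) (W k)) (α : ↥U ≃ₗ[ZMod p] ↥U')
      (β : ↥U' ≃ₗ[ZMod p] ↥U''),
      α ∈ mor i j U U' → β ∈ mor j k U' U'' → (α.trans β) ∈ mor i k U U''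
  inv_mem : ∀ (i j : ι) (U : Submodule (ZMod p) (W i)) (U' : Submodule (ZMod p) (W j))
      (α : ↥U ≃ₗ[ZMod p] ↥U'),
      α ∈ mor i j U U' → α.symm ∈ mor j i U' U

section Restriction

variable {Wi Wj : FDVec p} {U : Submodule (ZMod p) Wi} {U' : Submodule (ZMod p) Wj}

/-- The restriction of `α : U ≃ U'` to a subspace `M ≤ U`, as a map to the ambient space. -/
def restrictMap (α : ↥U ≃ₗ[ZMod p] ↥U') {M : Submodule (ZMod p) Wi}
    (hMU : M ≤ U) : ↥M →ₗ[ZMod p] Wj :=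
  U'.subtype ∘ₗ (α.toLinearMap) ∘ₗ (Submodule.inclusion hMU)

theorem restrictMap_injective (α : ↥U ≃ₗ[ZMod p] ↥U')
    {M : Submodule (ZMod p) Wi} (hMU : M ≤ U) :
    Function.Injective (restrictMap α hMU) := by
  intro a b hab
  have h1 : α (Submodule.inclusion hMU a) = α (Submodule.inclusion hMU b) := Subtype.ext hab
  have h2 := α.injective h1
  have h3 := congrArg Subtype.val h2
  exact Subtype.ext h3

/-- The image `α(M)` of a subspace `M ≤ U` under `α : U ≃ U'`. -/
def restrictImg (α : ↥U ≃ₗ[ZMod p] ↥U') {M : Submodule (ZMod p) Wi}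
    (hMU : M ≤ U) : Submodule (ZMod p) Wj :=
  LinearMap.range (restrictMap α hMU)

/-- The restriction-corestriction `α_M : M ≃ α(M)` of `α : U ≃ U'` to `M ≤ U`. -/
noncomputable def restrictEquiv (α : ↥U ≃ₗ[ZMod p] ↥U')
    {M : Submodule (ZMod p) Wi} (hMU : M ≤ U) :
    ↥M ≃ₗ[ZMod p] ↥(restrictImg α hMU) :=
  LinearEquiv.ofInjective _ (restrictMap_injective α hMU)

end Restriction

/-- The restriction property of a groupoid on subspaces. -/
def SubGroupoid.HasRestriction {ι : Type} {W : ι → FDVec p} (G : SubGroupoid W) : Prop :=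
  ∀ (i j : ι) (U : Submodule (ZMod p) (W i)) (U' : Submodule (ZMod p) (W j))
    (α : ↥U ≃ₗ[ZMod p] ↥U'), α ∈ G.mor i j U U' →
    ∀ (M : Submodule (ZMod p) (W i)) (hMU : M ≤ U),
      restrictEquiv α hMU ∈ G.mor i j M (restrictImg α hMU)

/-- An element of `⊔_{i} Hom_{𝒱I}(V, W i)`. -/
def InjHom (V : FDVec p) {ι : Type} (W : ι → FDVec p) : Type :=
  Σ i : ι, {f : V →ₗ[ZMod p] W i // Function.Injective f}

/-- The relation `∼_𝒢` on `⊔_i Hom_{𝒱I}(V, W i)`. -/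
def SubGroupoid.Rel {ι : Type} {W : ι → FDVec p} (G : SubGroupoid W) (V : FDVec p)
    (x y : InjHom V W) : Prop :=
  ∃ α ∈ G.mor x.1 y.1 (LinearMap.range x.2.1) (LinearMap.range y.2.1),
    ∀ v : V, ((α (x.2.1.rangeRestrict v) : ↥(LinearMap.range y.2.1)) : W y.1) = y.2.1 v

/-- A generating family of a presheaf `F` on `𝒱I`: a natural surjection
`q : ⊔_i Hom_{𝒱I}(−, W i) → F`. -/
structure GenFamily {ι : Type} (W : ι → FDVec p) (F : VIPresheaf p) where
  q : ∀ (V : FDVec p) (i : ι) (f : V →ₗ[ZMod p] W i), Function.Injective f → F.obj V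
  natural : ∀ (T V : FDVec p) (β : T →ₗ[ZMod p] V) (hβ : Function.Injective β)
      (i : ι) (f : V →ₗ[ZMod p] W i) (hf : Function.Injective f)
      (hfβ : Function.Injective (f ∘ₗ β)),
      q T i (f ∘ₗ β) hfβ = F.map β hβ (q V i f hf)
  surjective : ∀ (V : FDVec p) (x : F.obj V), ∃ i f hf, q V i f hf = x

/-- `φ_i = q(id_{W i})`. -/
def GenFamily.phi {ι : Type} {W : ι → FDVec p} {F : VIPresheaf p} (Q : GenFamily W F)
    (i : ι) : F.obj (W i) :=
  Q.q (W i) i LinearMap.id (linearMap_id_injective _)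

/-- The morphisms of the groupoid `𝒢_{(F,q)}`: isomorphisms `α : U ≃ U'` with
`α^* ι_{U'}^* φ_j = ι_U^* φ_i`. -/
def GenFamily.mor {ι : Type} {W : ι → FDVec p} {F : VIPresheaf p} (Q : GenFamily W F)
    (i j : ι) (U : Submodule (ZMod p) (W i)) (U' : Submodule (ZMod p) (W j)) :
    Set (↥U ≃ₗ[ZMod p] ↥U') :=
  {α | F.map (V := subFD U) (W := subFD U') α.toLinearMap (equiv_toLinearMap_injective α)
        (F.map (V := subFD U') (W := W j) U'.subtype U'.injective_subtype (Q.phi j))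
      = F.map (V := subFD U) (W := W i) U.subtype U.injective_subtype (Q.phi i)}

/-- The relation `∼_{𝒢_{(F,q)}}`. -/
def GenFamily.GRel {ι : Type} {W : ι → FDVec p} {F : VIPresheaf p} (Q : GenFamily W F)
    (V : FDVec p) (x y : InjHom V W) : Prop :=
  ∃ α ∈ Q.mor x.1 y.1 (LinearMap.range x.2.1) (LinearMap.range y.2.1),
    ∀ v : V, ((α (x.2.1.rangeRestrict v) : ↥(LinearMap.range y.2.1)) : W y.1) = y.2.1 v

/-- `x ∈ F_i(V)`, where `F_i ⊆ F` is the image of `Hom_{𝒱I}(−, W i)` under `q`. -/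
def GenFamily.memComponent {ι : Type} {W : ι → FDVec p} {F : VIPresheaf p}
    (Q : GenFamily W F) (i : ι) (V : FDVec p) (x : F.obj V) : Prop :=
  ∃ f hf, Q.q V i f hf = x

/-- Minimality of a generating family: `F_i ⊄ F_j` for `i ≠ j`. -/
def GenFamily.Minimal {ι : Type} {W : ι → FDVec p} {F : VIPresheaf p}
    (Q : GenFamily W F) : Prop :=
  ∀ i j : ι, i ≠ j →
    ¬ (∀ (V : FDVec p) (x : F.obj V), Q.memComponent i V x → Q.memComponent j V x)

/-- A class in `𝐁(V, W)`, represented canonically by its "glue" subspace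
`G = {(ν m, −ω m) : m ∈ M} ⊆ V × W`.  The two conditions express the injectivity
of `ν` and of `ω` respectively. -/
structure Corr (p : ℕ) [Fact p.Prime] (V W : FDVec p) where
  carrier : Submodule (ZMod p) (↥V × ↥W)
  inj_left : ∀ m ∈ carrier, Prod.fst m = 0 → m = 0
  inj_right : ∀ m ∈ carrier, Prod.snd m = 0 → m = 0

/-- The pushout `V ⊕_{ν,ω} W` of a class of `𝐁(V,W)`. -/
abbrev Corr.po {V W : FDVec p} (c : Corr p V W) : FDVec p :=
  FDVec.of p ((↥V × ↥W) ⧸ c.carrier)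

/-- The canonical injection `ι_V : V → V ⊕_{ν,ω} W`. -/
def Corr.inl {V W : FDVec p} (c : Corr p V W) : V →ₗ[ZMod p] c.po :=
  c.carrier.mkQ ∘ₗ LinearMap.inl (ZMod p) ↥V ↥W

/-- The canonical injection `ι_W : W → V ⊕_{ν,ω} W`. -/
def Corr.inr {V W : FDVec p} (c : Corr p V W) : W →ₗ[ZMod p] c.po :=
  c.carrier.mkQ ∘ₗ LinearMap.inr (ZMod p) ↥V ↥W

theorem Corr.inl_injective {V W : FDVec p} (c : Corr p V W) :
    Function.Injective c.inl := by
  intro a b hab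
  have h : (Submodule.Quotient.mk ((a, 0) : ↥V × ↥W) : (↥V × ↥W) ⧸ c.carrier)
      = Submodule.Quotient.mk (b, 0) := hab
  have hmem : ((a, 0) : ↥V × ↥W) - (b, 0) ∈ c.carrier := by
    rwa [Submodule.Quotient.eq] at h
  have h2 := c.inj_right _ hmem (by simp)
  have h3 := congrArg Prod.fst h2
  simpa [sub_eq_zero] using h3

theorem Corr.inr_injective {V W : FDVec p} (c : Corr p V W) :
    Function.Injective c.inr := by
  intro a b hab
  have h : (Submodule.Quotient.mk ((0, a) : ↥V × ↥W) : (↥V × ↥W) ⧸ c.carrier)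
      = Submodule.Quotient.mk (0, b) := hab
  have hmem : ((0, a) : ↥V × ↥W) - (0, b) ∈ c.carrier := by
    rwa [Submodule.Quotient.eq] at h
  have h2 := c.inj_left _ hmem (by simp)
  have h3 := congrArg Prod.snd h2
  simpa [sub_eq_zero] using h3

/-- The fibre `σ_{(V,x)}F(W)` of `σ_V F(W) = ⊔_{𝐁(V,W)} F(V ⊕_{ν,ω} W)` over `x ∈ F(V)`. -/
def CentralFib (F : VIPresheaf p) (V : FDVec p) (x : F.obj V) (W : FDVec p) : Type :=
  Σ c : Corr p V W,
    {b : F.obj c.po // F.map (V := V) (W := c.po) c.inl c.inl_injective b = x}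

/-- The map `ρ_{F,(V,x)} : σ_{(V,x)}F(W) → F(W)`, sending `b` to `ι_W^* b`. -/
def centralMap (F : VIPresheaf p) (V : FDVec p) (x : F.obj V) (W : FDVec p) :
    CentralFib F V x W → F.obj W :=
  fun s => F.map (V := W) (W := Sigma.fst s |>.po) s.1.inr s.1.inr_injective s.2.1

/-- `(V, x)` is central for `F` if `ρ_{F,(V,x)}` is an isomorphism of presheaves. -/
def VIPresheaf.IsCentral (F : VIPresheaf p) (V : FDVec p) (x : F.obj V) : Prop :=
  ∀ W : FDVec p, Function.Bijective (centralMap F V x W)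

/-- The class of `𝐁(V, U)` associated with a pair of injections `δ : V → W`, `ε : U → W`:
its glue subspace is `ker(δ + ε) ⊆ V × U`. -/
def kerCorr {V U W : FDVec p} (δ : V →ₗ[ZMod p] W) (ε : U →ₗ[ZMod p] W)
    (hδ : Function.Injective δ) (hε : Function.Injective ε) : Corr p V U where
  carrier := LinearMap.ker (δ.coprod ε)
  inj_left := by
    intro m hm h1
    have hk : δ m.1 + ε m.2 = 0 := by simpa [LinearMap.mem_ker] using hm
    rw [h1] at hk
    simp only [map_zero, zero_add] at hk
    have h2 : m.2 = 0 := hε (by simpa using hk)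
    exact Prod.ext h1 h2
  inj_right := by
    intro m hm h2
    have hk : δ m.1 + ε m.2 = 0 := by simpa [LinearMap.mem_ker] using hm
    rw [h2] at hk
    simp only [map_zero, add_zero] at hk
    have h1 : m.1 = 0 := hδ (by simpa using hk)
    exact Prod.ext h1 h2

/-- The isomorphism `ε ↑ δ : V ⊕_{ν,μ} U ≃ δ(V) + ε(U)` of the first isomorphism theorem. -/
noncomputable def upArrow {V U W : FDVec p} (δ : V →ₗ[ZMod p] W) (ε : U →ₗ[ZMod p] W) :
    ((↥V × ↥U) ⧸ LinearMap.ker (δ.coprod ε)) ≃ₗ[ZMod p]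
      ↥(LinearMap.range δ ⊔ LinearMap.range ε : Submodule (ZMod p) W) :=
  (δ.coprod ε).quotKerEquivRange ≪≫ₗ LinearEquiv.ofEq _ _ (LinearMap.range_coprod δ ε)

/-- The class `[T, id_T, α] ∈ 𝐁(V, T)` associated with an injection `α : T → V`. -/
def idCorr {V T : FDVec p} (α : T →ₗ[ZMod p] V) (hα : Function.Injective α) :
    Corr p V T where
  carrier := LinearMap.range (α.prod (-(LinearMap.id : T →ₗ[ZMod p] T)))
  inj_left := by
    rintro m ⟨t, rfl⟩ h1
    simp only [LinearMap.prod_apply, Pi.prod, LinearMap.neg_apply, LinearMap.id_apply] at h1 ⊢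
    have ht : t = 0 := hα (by simpa using h1)
    simp [ht]
  inj_right := by
    rintro m ⟨t, rfl⟩ h2
    simp only [LinearMap.prod_apply, Pi.prod, LinearMap.neg_apply, LinearMap.id_apply] at h2 ⊢
    have ht : t = 0 := by simpa [neg_eq_zero] using h2
    simp [ht]

section GroupQuotient

variable {p : ℕ} [Fact p.Prime] (W : FDVec p) (G : Subgroup (↥W ≃ₗ[ZMod p] ↥W))

/-- The relation on `Hom_{𝒱I}(V, W)` given by postcomposition by elements of `G ≤ GL(W)`. -/
def grel (V : FDVec p) (f g : {f : V →ₗ[ZMod p] W // Function.Injective f}) : Prop :=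
  ∃ γ ∈ G, (γ : ↥W ≃ₗ[ZMod p] ↥W).toLinearMap ∘ₗ f.1 = g.1

theorem grel_equiv (V : FDVec p) : Equivalence (grel W G V) := by
  constructor
  · intro f
    exact ⟨1, one_mem G, LinearMap.ext fun v => rfl⟩
  · rintro f g ⟨γ, hγ, hfg⟩
    refine ⟨γ⁻¹, inv_mem hγ, LinearMap.ext fun v => ?_⟩
    have h0 : (γ : ↥W ≃ₗ[ZMod p] ↥W) (f.1 v) = g.1 v :=
      congrArg (fun (k : _ →ₗ[ZMod p] ↥W) => k v) hfg
    show (γ⁻¹ : ↥W ≃ₗ[ZMod p] ↥W) (g.1 v) = f.1 v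
    rw [← h0]
    exact (γ : ↥W ≃ₗ[ZMod p] ↥W).symm_apply_apply (f.1 v)
  · rintro f g h ⟨γ, hγ, hfg⟩ ⟨γ', hγ', hgh⟩
    refine ⟨γ' * γ, mul_mem hγ' hγ, LinearMap.ext fun v => ?_⟩
    have h1 := congrArg (fun (k : _ →ₗ[ZMod p] ↥W) => (γ' : ↥W ≃ₗ[ZMod p] ↥W) (k v)) hfg
    have h2 := congrArg (fun (k : _ →ₗ[ZMod p] ↥W) => k v) hgh
    simp only [LinearMap.comp_apply] at h1 h2 ⊢
    exact h1.trans h2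

/-- The setoid on `Hom_{𝒱I}(V, W)` determined by `G`. -/
def gSetoid (V : FDVec p) : Setoid {f : V →ₗ[ZMod p] W // Function.Injective f} :=
  ⟨grel W G V, grel_equiv W G V⟩

/-- The presheaf `V ↦ Hom_{𝒱I}(V, W)/G`, where `G` acts by postcomposition. -/
def homModG : VIPresheaf p where
  obj V := Quotient (gSetoid W G V)
  map {T V} β hβ x :=
    Quotient.liftOn x
      (fun f => (Quotient.mk (gSetoid W G T) ⟨f.1 ∘ₗ β, comp_injective β f.1 hβ f.2⟩))
      (by
        rintro f g ⟨γ, hγ, hfg⟩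
        refine Quotient.sound ⟨γ, hγ, ?_⟩
        show (γ : ↥W ≃ₗ[ZMod p] ↥W).toLinearMap ∘ₗ (f.1 ∘ₗ β) = g.1 ∘ₗ β
        rw [← LinearMap.comp_assoc, hfg])
  map_id := by
    intro V h x
    refine Quotient.inductionOn x (fun f => ?_)
    exact congrArg (Quotient.mk (gSetoid W G V)) (Subtype.ext (LinearMap.comp_id f.1))
  map_comp := by
    intro V V' X f hf g hg hgf x
    refine Quotient.inductionOn x (fun k => ?_)
    exact congrArg (Quotient.mk (gSetoid W G V)) (Subtype.ext (LinearMap.comp_assoc f g k.1).symm)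

/-- The canonical surjection `q : Hom_{𝒱I}(−, W) → Hom_{𝒱I}(−, W)/G`, as a generating
family indexed by a single space. -/
def qModG : GenFamily (fun _ : PUnit => W) (homModG W G) where
  q V _ f hf := Quotient.mk (gSetoid W G V) ⟨f, hf⟩
  natural := by
    intro T V β hβ i f hf hfβ
    rfl
  surjective := by
    intro V x
    refine Quotient.inductionOn x (fun f => ?_)
    exact ⟨PUnit.unit, f.1, f.2, rfl⟩

end GroupQuotient

/-- The subspace `C = {w ∈ W : g(w) = w for all g ∈ G}` of fixed points. -/
def fixedC {p : ℕ} [Fact p.Prime] (W : FDVec p) (G : Subgroup (↥W ≃ₗ[ZMod p] ↥W)) :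
    Submodule (ZMod p) W where
  carrier := {w | ∀ γ ∈ G, (γ : ↥W ≃ₗ[ZMod p] ↥W) w = w}
  add_mem' := by
    intro a b ha hb γ hγ
    rw [map_add, ha γ hγ, hb γ hγ]
  zero_mem' := by
    intro γ hγ
    exact map_zero _
  smul_mem' := by
    intro c a ha γ hγ
    rw [map_smul, ha γ hγ]

section Descent

variable {p : ℕ} [Fact p.Prime]

theorem Corr.ext_carrier {V U : FDVec p} {c d : Corr p V U} (h : c.carrier = d.carrier) :
    c = d := by
  cases c
  cases d
  cases h
  rfl

/-- An injective map out of a pushout has the glue subspace as the kernel of its pullback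
to the product. -/
theorem Corr.mem_carrier_iff {V U W : FDVec p} (c : Corr p V U) (f : c.po →ₗ[ZMod p] W)
    (hf : Function.Injective f) (m : ↥V × ↥U) :
    m ∈ c.carrier ↔ f (c.inl m.1) + f (c.inr m.2) = 0 := by
  have h : f (c.inl m.1) + f (c.inr m.2) = f (c.carrier.mkQ m) := by
    simp only [Corr.inl, Corr.inr, LinearMap.comp_apply, ← map_add]
    simp
  rw [h, map_eq_zero_iff f hf, Submodule.mkQ_apply, Submodule.Quotient.mk_eq_zero]

/-- Maps out of a pushout are determined by their restrictions to the two summands. -/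
theorem Corr.hom_ext {V U W : FDVec p} (c : Corr p V U) {f g : c.po →ₗ[ZMod p] W}
    (hl : f ∘ₗ c.inl = g ∘ₗ c.inl) (hr : f ∘ₗ c.inr = g ∘ₗ c.inr) : f = g :=
  Submodule.linearMap_qext _ (LinearMap.prod_ext hl hr)

/-- The injection `V ⊕_{ν,ω} U → W` induced by two injections `δ : V → W`, `ε : U → W`. -/
def kerDesc {V U W : FDVec p} (δ : V →ₗ[ZMod p] W) (ε : U →ₗ[ZMod p] W)
    (hδ : Function.Injective δ) (hε : Function.Injective ε) :
    (kerCorr δ ε hδ hε).po →ₗ[ZMod p] W :=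
  (LinearMap.ker (δ.coprod ε)).liftQ (δ.coprod ε) le_rfl

theorem kerDesc_injective {V U W : FDVec p} (δ : V →ₗ[ZMod p] W) (ε : U →ₗ[ZMod p] W)
    (hδ : Function.Injective δ) (hε : Function.Injective ε) :
    Function.Injective (kerDesc δ ε hδ hε) :=
  LinearMap.ker_eq_bot.mp (Submodule.ker_liftQ_eq_bot _ _ _ le_rfl)

theorem kerDesc_comp_inl {V U W : FDVec p} (δ : V →ₗ[ZMod p] W) (ε : U →ₗ[ZMod p] W)
    (hδ : Function.Injective δ) (hε : Function.Injective ε) :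
    kerDesc δ ε hδ hε ∘ₗ (kerCorr δ ε hδ hε).inl = δ := by
  ext v
  show δ v + ε 0 = δ v
  simp

theorem kerDesc_comp_inr {V U W : FDVec p} (δ : V →ₗ[ZMod p] W) (ε : U →ₗ[ZMod p] W)
    (hδ : Function.Injective δ) (hε : Function.Injective ε) :
    kerDesc δ ε hδ hε ∘ₗ (kerCorr δ ε hδ hε).inr = ε := by
  ext u
  show δ 0 + ε u = ε u
  simp

end Descent

section Centre

variable {p : ℕ} [Fact p.Prime] (W : FDVec p) (G : Subgroup (↥W ≃ₗ[ZMod p] ↥W))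

/-- The point of the fibre `σ_{(V,q(δ))}F(U)` given by injections `δ' : V → W` in the
`G`-orbit of `δ` and `ε : U → W`. -/
def fibPoint {V U : FDVec p} (x : (homModG W G).obj V) (δ' : V →ₗ[ZMod p] W)
    (ε : U →ₗ[ZMod p] W) (hδ' : Function.Injective δ') (hε : Function.Injective ε)
    (hx : Quotient.mk (gSetoid W G V) ⟨δ', hδ'⟩ = x) :
    CentralFib (homModG W G) V x U :=
  ⟨kerCorr δ' ε hδ' hε,
    Quotient.mk (gSetoid W G _) ⟨kerDesc δ' ε hδ' hε, kerDesc_injective δ' ε hδ' hε⟩,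
    Eq.trans (congrArg (Quotient.mk (gSetoid W G V))
      (Subtype.ext (kerDesc_comp_inl δ' ε hδ' hε))) hx⟩

theorem centralMap_fibPoint {V U : FDVec p} (x : (homModG W G).obj V) (δ' : V →ₗ[ZMod p] W)
    (ε : U →ₗ[ZMod p] W) (hδ' : Function.Injective δ') (hε : Function.Injective ε)
    (hx : Quotient.mk (gSetoid W G V) ⟨δ', hδ'⟩ = x) :
    centralMap (homModG W G) V x U (fibPoint W G x δ' ε hδ' hε hx)
      = Quotient.mk (gSetoid W G U) ⟨ε, hε⟩ :=
  congrArg (Quotient.mk (gSetoid W G U)) (Subtype.ext (kerDesc_comp_inr δ' ε hδ' hε))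

theorem mem_fixedC_of_isCentral {V : FDVec p} (δ : V →ₗ[ZMod p] W) (hδ : Function.Injective δ)
    (h : (homModG W G).IsCentral V (Quotient.mk (gSetoid W G V) ⟨δ, hδ⟩)) (v : V) :
    δ v ∈ fixedC W G := by
  intro γ hγ
  have hγδ : Function.Injective (γ.toLinearMap ∘ₗ δ) :=
    comp_injective δ γ.toLinearMap hδ γ.injective
  have hx : Quotient.mk (gSetoid W G V) ⟨γ.toLinearMap ∘ₗ δ, hγδ⟩
      = Quotient.mk (gSetoid W G V) ⟨δ, hδ⟩ :=
    (Quotient.sound (s := gSetoid W G V) ⟨γ, hγ, rfl⟩).symm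
  have hid := linearMap_id_injective (p := p) W
  have heq := (h W).1 ((centralMap_fibPoint W G _ δ LinearMap.id hδ hid rfl).trans
    (centralMap_fibPoint W G _ (γ.toLinearMap ∘ₗ δ) LinearMap.id hγδ hid hx).symm)
  have hc : kerCorr δ LinearMap.id hδ hid
      = kerCorr (γ.toLinearMap ∘ₗ δ) LinearMap.id hγδ hid := congrArg Sigma.fst heq
  have hmem : ((v, -δ v) : ↥V × ↥W) ∈ (kerCorr δ LinearMap.id hδ hid).carrier := by
    show δ v + -δ v = 0
    simp
  rw [hc] at hmem
  have h0 : γ (δ v) + -δ v = 0 := hmem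
  exact add_neg_eq_zero.mp h0

theorem isCentral_of_mem_fixedC {V : FDVec p} (δ : V →ₗ[ZMod p] W) (hδ : Function.Injective δ)
    (h : ∀ v, δ v ∈ fixedC W G) :
    (homModG W G).IsCentral V (Quotient.mk (gSetoid W G V) ⟨δ, hδ⟩) := by
  have key : ∀ f : {f : V →ₗ[ZMod p] W // Function.Injective f},
      Quotient.mk (gSetoid W G V) f = Quotient.mk (gSetoid W G V) ⟨δ, hδ⟩ → f.1 = δ := by
    intro f hf
    obtain ⟨γ, hγ, hγf⟩ := Quotient.exact (s := gSetoid W G V) hf.symm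
    rw [← hγf]
    ext v
    exact h v γ hγ
  intro U
  constructor
  · rintro ⟨c, b, hb⟩ ⟨d, b', hb'⟩ heq
    induction b using Quotient.inductionOn with | _ f => ?_
    induction b' using Quotient.inductionOn with | _ g => ?_
    have hf : f.1 ∘ₗ c.inl = δ := key _ hb
    have hg : g.1 ∘ₗ d.inl = δ := key _ hb'
    obtain ⟨γ, hγ, hγf⟩ := Quotient.exact (s := gSetoid W G U) heq
    have hr : ∀ u, γ (f.1 (c.inr u)) = g.1 (d.inr u) := fun u => LinearMap.congr_fun hγf u
    have hl : ∀ v, γ (f.1 (c.inl v)) = g.1 (d.inl v) := fun v => by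
      have h1 : f.1 (c.inl v) = δ v := LinearMap.congr_fun hf v
      have h2 : g.1 (d.inl v) = δ v := LinearMap.congr_fun hg v
      rw [h1, h2]
      exact h v γ hγ
    have hcd : c = d := by
      refine Corr.ext_carrier (Submodule.ext fun m => ?_)
      rw [c.mem_carrier_iff f.1 f.2, d.mem_carrier_iff g.1 g.2, ← hl, ← hr,
        ← map_add γ, map_eq_zero_iff γ γ.injective]
    subst hcd
    have hfg : Quotient.mk (gSetoid W G c.po) f = Quotient.mk (gSetoid W G c.po) g :=
      Quotient.sound (s := gSetoid W G c.po)
        ⟨γ, hγ, c.hom_ext (LinearMap.ext hl) (LinearMap.ext hr)⟩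
    exact congrArg (Sigma.mk c) (Subtype.ext hfg)
  · intro y
    induction y using Quotient.inductionOn with | _ ε => ?_
    exact ⟨_, centralMap_fibPoint W G _ δ ε.1 hδ ε.2 rfl⟩

theorem isCentral_iff_factors {V : FDVec p} (δ : V →ₗ[ZMod p] W) (hδ : Function.Injective δ) :
    (homModG W G).IsCentral V (Quotient.mk (gSetoid W G V) ⟨δ, hδ⟩) ↔
      ∃ δ₀ : V →ₗ[ZMod p] ↥(fixedC W G), (fixedC W G).subtype ∘ₗ δ₀ = δ := by
  constructor
  · intro h
    exact ⟨δ.codRestrict _ (mem_fixedC_of_isCentral W G δ hδ h), LinearMap.ext fun _ => rfl⟩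
  · rintro ⟨δ₀, rfl⟩
    exact isCentral_of_mem_fixedC W G _ hδ fun v => (δ₀ v).2

end Centre

/-- **Statement 19.** Let `F := Hom_{𝒱I}(−, W)/G` and `C := {w ∈ W : ∀ g ∈ G, g w = w}`
with inclusion `ι_C`.  For an injective linear map `δ : V → W`, the pair `(V, q(δ))` is
central for `F` iff `δ` factors through `ι_C`; consequently `(C, q(ι_C))` is central, and
every central element of `F` has the form `(V, α^* q(ι_C))` for an injective `α : V → C`:
the centre of `F` is `(C, q(ι_C))`. -/
theorem statement_19 {p : ℕ} [Fact p.Prime] (W : FDVec p)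
    (G : Subgroup (↥W ≃ₗ[ZMod p] ↥W)) :
    (∀ (V : FDVec p) (δ : V →ₗ[ZMod p] W) (hδ : Function.Injective δ),
        (homModG W G).IsCentral V (Quotient.mk (gSetoid W G V) ⟨δ, hδ⟩) ↔
          ∃ δ₀ : V →ₗ[ZMod p] ↥(fixedC W G), (fixedC W G).subtype ∘ₗ δ₀ = δ) ∧
    (homModG W G).IsCentral (subFD (fixedC W G))
        (Quotient.mk (gSetoid W G (subFD (fixedC W G)))
          ⟨(fixedC W G).subtype, (fixedC W G).injective_subtype⟩) ∧
    (∀ (V : FDVec p) (x : (homModG W G).obj V), (homModG W G).IsCentral V x →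
        ∃ (α : V →ₗ[ZMod p] ↥(fixedC W G)) (hα : Function.Injective α),
          x = (homModG W G).map (V := V) (W := subFD (fixedC W G)) α hα
            (Quotient.mk (gSetoid W G (subFD (fixedC W G)))
              ⟨(fixedC W G).subtype, (fixedC W G).injective_subtype⟩)) := by
  refine ⟨fun V δ hδ => isCentral_iff_factors W G δ hδ, ?_, ?_⟩
  · exact isCentral_of_mem_fixedC W G (V := subFD (fixedC W G)) _ _ fun v => v.2
  · intro V x hx
    induction x using Quotient.inductionOn with | _ δ => ?_
    obtain ⟨δ, hδ⟩ := δ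
    obtain ⟨δ₀, rfl⟩ := (isCentral_iff_factors W G δ hδ).mp hx
    exact ⟨δ₀, Function.Injective.of_comp (f := (fixedC W G).subtype) hδ, rfl⟩

end Paper
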